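/- arXiv:2401.02904 — 2 statements merged into one kernel-verified Lean document; each statement's English description precedes it below -/
import Mathlib

section
/- Assume the loss ℓ(w,x,y) takes values in [0,1]. Then the standard expected generalization error gen = E[(1/n) Σ_{i=1}^n (ℓ(W,Z_i^{−U_i}) − ℓ(W,Z_i^{U_i}))] satisfies |gen| ≤ E_{Y'~P_Y}[E_{Z_{[2n]}}[(1/n^{Y'}) Σ_{i=1}^n sqrt(2·max(𝟙{Y_i^-=Y'}, 𝟙{Y_i^+=Y'})·I_{Z_{[2n]}}(W;U_i))]]. -/
open MeasureTheory ProbabilityTheory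
open scoped ENNReal

noncomputable section

open Classical in
/-- Kullback–Leibler divergence: `∞` unless `μ ≪ ν` and the log-likelihood ratio is
`μ`-integrable. -/
def KL {α : Type*} [MeasurableSpace α] (μ ν : Measure α) : ℝ≥0∞ :=
  if μ ≪ ν ∧ Integrable (llr μ ν) μ then ENNReal.ofReal (∫ x, llr μ ν x ∂μ) else ∞

/-- Fair coin measure on `Bool` (the law of a uniform `{−1,+1}` selector, `true ↔ +1`). -/
def coin : Measure Bool :=
  (2 : ℝ≥0∞)⁻¹ • Measure.dirac true + (2 : ℝ≥0∞)⁻¹ • Measure.dirac false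

/-- Disintegrated conditional mutual information `I_z(A;B)` given `Z = z`, defined through
regular conditional distributions: `KL(P_{A,B|Z=z} ‖ P_{A|Z=z} ⊗ P_{B|Z=z})`. -/
def dCMI {Ω γ α β : Type*} [MeasurableSpace Ω] [MeasurableSpace γ]
    [MeasurableSpace α] [StandardBorelSpace α] [Nonempty α]
    [MeasurableSpace β] [StandardBorelSpace β] [Nonempty β]
    (μ : Measure Ω) [IsFiniteMeasure μ]
    (A : Ω → α) (B : Ω → β) (Z : Ω → γ) (z : γ) : ℝ≥0∞ :=
  KL (condDistrib (fun ω => (A ω, B ω)) Z μ z)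
    ((condDistrib A Z μ z).prod (condDistrib B Z μ z))

/-- The super-sample entry selected by `u`, i.e. `z^{u}` (the training sample):
`zz = (z⁻, z⁺)` and `u = true` means `+1`. -/
def trainSel {𝒵 : Type*} (zz : 𝒵 × 𝒵) (u : Bool) : 𝒵 := if u then zz.2 else zz.1

/-- The super-sample entry not selected by `u`, i.e. `z^{−u}` (the test sample). -/
def testSel {𝒵 : Type*} (zz : 𝒵 × 𝒵) (u : Bool) : 𝒵 := if u then zz.1 else zz.2

/-! Conditionally on the super-sample `Z = z`, the gap between the test loss and the training loss
of the `i`-th pair is a function of `(W, U_i)` bounded by `1`, and flipping `U_i` changes its sign.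
Hence it is centred, and by Hoeffding's lemma sub-Gaussian, under `P_{W|z} ⊗ P_{U_i|z}`, so that the
Donsker–Varadhan inequality bounds its conditional mean by `√(2 I_z(W;U_i))`. Integrating over `z`
and splitting according to the label `y` of `Z_i^-`, an event of probability `P_Y{y}`, turns the
average over `i` into an average over `y ∼ P_Y` with weights `1 / (n P_Y{y})`. On this event the
maximum of the two label indicators is `1`. -/

section KullbackLeibler

variable {α : Type*} [MeasurableSpace α] {p q : Measure α} [IsProbabilityMeasure p] {f : α → ℝ}

lemma integral_le_integral_llr_add_log_integral_exp [SigmaFinite q] (hpq : p ≪ q)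
    (hllr : Integrable (llr p q) p) (hfp : Integrable f p)
    (hfq : Integrable (fun x ↦ Real.exp (f x)) q) :
    ∫ x, f x ∂p ≤ ∫ x, llr p q x ∂p + Real.log (∫ x, Real.exp (f x) ∂q) := by
  have : NeZero q := ⟨by
    rintro rfl
    exact IsProbabilityMeasure.ne_zero p (Measure.absolutelyContinuous_zero_iff.1 hpq)⟩
  have := isProbabilityMeasure_tilted hfq
  have hgibbs := InformationTheory.integral_llr_add_sub_measure_univ_nonneg
    (hpq.trans (absolutelyContinuous_tilted hfq))
    (integrable_llr_tilted_right hpq hfp hllr hfq)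
  rw [integral_llr_tilted_right hpq hfp hfq hllr, probReal_univ, probReal_univ] at hgibbs
  linarith

lemma sq_integral_le_of_hasSubgaussianMGF {c : NNReal} [SigmaFinite q] (hpq : p ≪ q)
    (hllr : Integrable (llr p q) p) (hfp : Integrable f p) (hf : HasSubgaussianMGF f c q) :
    (∫ x, f x ∂p) ^ 2 ≤ 2 * c * ∫ x, llr p q x ∂p := by
  have hquad (t : ℝ) :
      0 ≤ (c / 2 : ℝ) * (t * t) + (-∫ x, f x ∂p) * t + ∫ x, llr p q x ∂p := by
    have hdv := integral_le_integral_llr_add_log_integral_exp hpq hllr (hfp.const_mul t)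
      (hf.integrable_exp_mul t)
    have hcgf : Real.log (∫ x, Real.exp (t * f x) ∂q) ≤ c * t ^ 2 / 2 := hf.cgf_le t
    rw [integral_const_mul] at hdv
    linarith
  have hdiscrim := discrim_le_zero hquad
  rw [discrim] at hdiscrim
  linarith

lemma enorm_integral_le_sqrt_KL_of_hasSubgaussianMGF {c : NNReal} (hc : c ≠ 0) [SigmaFinite q]
    (hfp : Integrable f p) (hf : HasSubgaussianMGF f c q) :
    ‖∫ x, f x ∂p‖ₑ ≤ (2 * c * KL p q) ^ (1 / 2 : ℝ) := by
  unfold KL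
  split_ifs with h
  · have hsq := sq_integral_le_of_hasSubgaussianMGF h.1 h.2 hfp hf
    calc ‖∫ x, f x ∂p‖ₑ
        ≤ ENNReal.ofReal √(2 * c * ∫ x, llr p q x ∂p) := by
          rw [Real.enorm_eq_ofReal_abs]
          exact ENNReal.ofReal_le_ofReal (Real.abs_le_sqrt hsq)
      _ = (2 * c * ENNReal.ofReal (∫ x, llr p q x ∂p)) ^ (1 / 2 : ℝ) := by
          rw [Real.sqrt_eq_rpow,
            ← ENNReal.ofReal_rpow_of_nonneg ((sq_nonneg _).trans hsq) (by norm_num),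
            ENNReal.ofReal_mul (by positivity), ENNReal.ofReal_mul zero_le_two,
            ENNReal.ofReal_ofNat, ENNReal.ofReal_coe_nnreal]
  · rw [ENNReal.mul_top (by simpa using hc), ENNReal.top_rpow_of_pos (by norm_num)]
    exact le_top

lemma enorm_integral_le_sqrt_KL [IsProbabilityMeasure q] (hf : Measurable f)
    (hf1 : ∀ x, |f x| ≤ 1) (hmean : ∫ x, f x ∂q = 0) :
    ‖∫ x, f x ∂p‖ₑ ≤ (2 * KL p q) ^ (1 / 2 : ℝ) := by
  have hsub : HasSubgaussianMGF f ((‖(1 : ℝ) - -1‖₊ / 2) ^ 2) q :=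
    hasSubgaussianMGF_of_mem_Icc_of_integral_eq_zero hf.aemeasurable
      (ae_of_all _ fun x ↦ abs_le.1 (hf1 x)) hmean
  have hparam : (‖(1 : ℝ) - -1‖₊ / 2) ^ 2 = 1 := by
    ext
    norm_num
  have hint : Integrable f p := .of_bound hf.aestronglyMeasurable 1 (ae_of_all _ hf1)
  rw [hparam] at hsub
  simpa only [ENNReal.coe_one, mul_one] using
    enorm_integral_le_sqrt_KL_of_hasSubgaussianMGF one_ne_zero hint hsub

end KullbackLeibler

section Coin

instance isProbabilityMeasure_coin : IsProbabilityMeasure coin :=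
  ⟨by simp [coin, ENNReal.inv_two_add_inv_two]⟩

lemma integral_coin (f : Bool → ℝ) : ∫ u, f u ∂coin = (f true + f false) / 2 := by
  rw [coin, integral_add_measure (Integrable.of_finite.smul_measure (by simp))
    (Integrable.of_finite.smul_measure (by simp)), integral_smul_measure, integral_smul_measure,
    integral_dirac, integral_dirac, ENNReal.toReal_inv, ENNReal.toReal_ofNat, smul_eq_mul,
    smul_eq_mul]
  ring

lemma integral_prod_coin_eq_zero {α : Type*} [MeasurableSpace α] {ν : Measure α} [SFinite ν]
    {f : α × Bool → ℝ} (hf : Integrable f (ν.prod coin))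
    (hanti : ∀ a, f (a, false) = -f (a, true)) : ∫ x, f x ∂(ν.prod coin) = 0 := by
  simp only [integral_prod f hf, integral_coin, hanti, add_neg_cancel, zero_div, integral_zero]

end Coin

section Disintegration

variable {Ω α γ : Type*} [MeasurableSpace Ω] [MeasurableSpace α] [StandardBorelSpace α] [Nonempty α]
  [MeasurableSpace γ] {μ : Measure Ω} [IsFiniteMeasure μ] {X : Ω → α} {Z : Ω → γ}

lemma condDistrib_ae_eq_map_of_indepFun (hZ : AEMeasurable Z μ) (hX : AEMeasurable X μ)
    (hZX : IndepFun Z X μ) : ∀ᵐ z ∂(μ.map Z), condDistrib X Z μ z = μ.map X := by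
  refine condDistrib_ae_eq_of_measure_eq_compProd (κ := Kernel.const γ (μ.map X)) Z hX ?_
  rw [Measure.compProd_const, hZX.map_prod_eq_prod_map_map hZ hX]

lemma enorm_integral_le_lintegral_enorm_integral_condDistrib (hZ : AEMeasurable Z μ)
    (hX : AEMeasurable X μ) {f : γ → α → ℝ}
    (hf : Integrable (fun p : γ × α ↦ f p.1 p.2) (μ.map fun ω ↦ (Z ω, X ω))) :
    ‖∫ ω, f (Z ω) (X ω) ∂μ‖ₑ ≤ ∫⁻ z, ‖∫ x, f z x ∂condDistrib X Z μ z‖ₑ ∂(μ.map Z) := by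
  have htower : ∫ ω, f (Z ω) (X ω) ∂μ = ∫ z, ∫ x, f z x ∂condDistrib X Z μ z ∂(μ.map Z) := by
    rw [← integral_map (hZ.prodMk hX) hf.aestronglyMeasurable, ← compProd_map_condDistrib hX,
      Measure.integral_compProd (by rwa [compProd_map_condDistrib hX])]
  rw [htower]
  exact enorm_integral_le_lintegral_enorm _

lemma ae_enorm_integral_condDistrib_le_sqrt_dCMI {B : Ω → Bool} (hZ : AEMeasurable Z μ)
    (hB : HasLaw B coin μ) (hZB : IndepFun Z B μ) {f : γ → α × Bool → ℝ}
    (hf : ∀ z, Measurable (f z)) (hf1 : ∀ z x, |f z x| ≤ 1)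
    (hanti : ∀ z a, f z (a, false) = -f z (a, true)) :
    ∀ᵐ z ∂(μ.map Z), ‖∫ x, f z x ∂condDistrib (fun ω ↦ (X ω, B ω)) Z μ z‖ₑ ≤
      (2 * dCMI μ X B Z z) ^ (1 / 2 : ℝ) := by
  filter_upwards [condDistrib_ae_eq_map_of_indepFun hZ hB.aemeasurable hZB] with z hz
  refine enorm_integral_le_sqrt_KL (hf z) (hf1 z) ?_
  rw [hz, hB.map_eq]
  exact integral_prod_coin_eq_zero
    (.of_bound (hf z).aestronglyMeasurable 1 (ae_of_all _ (hf1 z))) (hanti z)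

end Disintegration

section LabelSplitting

variable {γ 𝒴 ι : Type*} [MeasurableSpace γ] [MeasurableSpace 𝒴] [MeasurableSingletonClass 𝒴]
  [Fintype ι] {ν : Measure γ}

lemma sum_setLIntegral_le_lintegral_sum_sqrt_max [DecidableEq 𝒴]
    {L L' : ι → γ → 𝒴} {h I : ι → γ → ℝ≥0∞} (hL : ∀ i, Measurable (L i))
    (hh : ∀ i, Measurable (h i)) (hI : ∀ i, ∀ᵐ z ∂ν, h i z ≤ (2 * I i z) ^ (1 / 2 : ℝ)) (y : 𝒴) :
    ∑ i, ∫⁻ z in L i ⁻¹' {y}, h i z ∂ν ≤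
      ∫⁻ z, ∑ i, (2 * max (if L i z = y then 1 else 0) (if L' i z = y then 1 else 0) *
        I i z) ^ (1 / 2 : ℝ) ∂ν := by
  have hfiber (i : ι) : MeasurableSet (L i ⁻¹' {y}) := hL i (measurableSet_singleton y)
  -- The integrands on the right may be non-measurable, so the sum enters the integral first.
  calc ∑ i, ∫⁻ z in L i ⁻¹' {y}, h i z ∂ν
      = ∫⁻ z, ∑ i, (L i ⁻¹' {y}).indicator (h i) z ∂ν := by
        rw [lintegral_finsetSum _ fun i _ ↦ (hh i).indicator (hfiber i)]
        simp only [lintegral_indicator (hfiber _)]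
    _ ≤ _ := by
        refine lintegral_mono_ae ?_
        filter_upwards [ae_all_iff.2 hI] with z hz
        refine Finset.sum_le_sum fun i _ ↦ Set.indicator_apply_le' (fun hi ↦ ?_) fun _ ↦ zero_le
        have hiy : L i z = y := hi
        rw [if_pos hiy, max_eq_left (by split_ifs <;> simp), mul_one]
        exact hz i

variable [Countable 𝒴] {P : Measure 𝒴} [IsFiniteMeasure P]

lemma lintegral_eq_lintegral_inv_mul_setLIntegral {L : γ → 𝒴} (hL : Measurable L)
    (hLP : ν.map L ≪ P) (h : γ → ℝ≥0∞) :
    ∫⁻ z, h z ∂ν = ∫⁻ y, (P {y})⁻¹ * ∫⁻ z in L ⁻¹' {y}, h z ∂ν ∂P := by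
  have hfiber (y : 𝒴) : MeasurableSet (L ⁻¹' {y}) := hL (measurableSet_singleton y)
  have hterm (y : 𝒴) :
      ∫⁻ z in L ⁻¹' {y}, h z ∂ν = ((P {y})⁻¹ * ∫⁻ z in L ⁻¹' {y}, h z ∂ν) * P {y} := by
    by_cases hy : P {y} = 0
    · have hnull : ν (L ⁻¹' {y}) = 0 := by
        rw [← Measure.map_apply hL (measurableSet_singleton y)]
        exact hLP hy
      rw [setLIntegral_measure_zero _ _ hnull, mul_zero, zero_mul]
    · rw [mul_right_comm, ENNReal.inv_mul_cancel hy (measure_ne_top P _), one_mul]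
  calc ∫⁻ z, h z ∂ν
      = ∫⁻ z in ⋃ y, L ⁻¹' {y}, h z ∂ν := by
        rw [← Set.preimage_iUnion, Set.iUnion_of_singleton, Set.preimage_univ, setLIntegral_univ]
    _ = ∑' y, ∫⁻ z in L ⁻¹' {y}, h z ∂ν := lintegral_iUnion hfiber (pairwise_disjoint_fiber L) h
    _ = ∫⁻ y, (P {y})⁻¹ * ∫⁻ z in L ⁻¹' {y}, h z ∂ν ∂P := by
        rw [lintegral_countable']
        exact tsum_congr hterm

lemma sum_lintegral_le_lintegral_inv_mul_lintegral_sum_sqrt_max [DecidableEq 𝒴]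
    {L L' : ι → γ → 𝒴} {h I : ι → γ → ℝ≥0∞} (hL : ∀ i, Measurable (L i))
    (hLP : ∀ i, ν.map (L i) ≪ P) (hh : ∀ i, Measurable (h i))
    (hI : ∀ i, ∀ᵐ z ∂ν, h i z ≤ (2 * I i z) ^ (1 / 2 : ℝ)) :
    ∑ i, ∫⁻ z, h i z ∂ν ≤
      ∫⁻ y, (P {y})⁻¹ * ∫⁻ z, ∑ i,
        (2 * max (if L i z = y then 1 else 0) (if L' i z = y then 1 else 0) *
          I i z) ^ (1 / 2 : ℝ) ∂ν ∂P := by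
  calc ∑ i, ∫⁻ z, h i z ∂ν
      = ∫⁻ y, ∑ i, (P {y})⁻¹ * ∫⁻ z in L i ⁻¹' {y}, h i z ∂ν ∂P := by
        rw [lintegral_finsetSum _ fun i _ ↦ measurable_of_countable _]
        exact Finset.sum_congr rfl fun i _ ↦
          lintegral_eq_lintegral_inv_mul_setLIntegral (hL i) (hLP i) (h i)
    _ ≤ _ := by
        simp only [← Finset.mul_sum]
        gcongr with y
        exact sum_setLIntegral_le_lintegral_sum_sqrt_max hL hh hI y

end LabelSplitting

section LossGap

variable {𝒲 𝒳 𝒴 : Type*}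

/-- The difference between the test loss and the training loss on the pair `zz = (z⁻, z⁺)`, as a
function of the weights and of the selector. -/
def lossGap (ℓ : 𝒲 → 𝒳 → 𝒴 → ℝ) (zz : (𝒳 × 𝒴) × (𝒳 × 𝒴)) (x : 𝒲 × Bool) : ℝ :=
  ℓ x.1 (testSel zz x.2).1 (testSel zz x.2).2 - ℓ x.1 (trainSel zz x.2).1 (trainSel zz x.2).2

variable {ℓ : 𝒲 → 𝒳 → 𝒴 → ℝ}

lemma lossGap_false (zz : (𝒳 × 𝒴) × (𝒳 × 𝒴)) (w : 𝒲) :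
    lossGap ℓ zz (w, false) = -lossGap ℓ zz (w, true) :=
  (neg_sub _ _).symm

lemma abs_lossGap_le_one (hℓ01 : ∀ w x y, ℓ w x y ∈ Set.Icc (0 : ℝ) 1)
    (zz : (𝒳 × 𝒴) × (𝒳 × 𝒴)) (x : 𝒲 × Bool) : |lossGap ℓ zz x| ≤ 1 := by
  obtain ⟨htest0, htest1⟩ := hℓ01 x.1 (testSel zz x.2).1 (testSel zz x.2).2
  obtain ⟨htrain0, htrain1⟩ := hℓ01 x.1 (trainSel zz x.2).1 (trainSel zz x.2).2
  rw [lossGap, abs_le]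
  constructor <;> linarith

lemma measurable_trainSel {𝒵 : Type*} [MeasurableSpace 𝒵] :
    Measurable fun p : (𝒵 × 𝒵) × Bool ↦ trainSel p.1 p.2 :=
  measurable_from_prod_countable_left <| Bool.rec measurable_fst measurable_snd

lemma measurable_testSel {𝒵 : Type*} [MeasurableSpace 𝒵] :
    Measurable fun p : (𝒵 × 𝒵) × Bool ↦ testSel p.1 p.2 :=
  measurable_from_prod_countable_left <| Bool.rec measurable_snd measurable_fst

lemma measurable_lossGap [MeasurableSpace 𝒲] [MeasurableSpace 𝒳] [MeasurableSpace 𝒴]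
    {γ : Type*} [MeasurableSpace γ] (hℓ : Measurable fun p : 𝒲 × 𝒳 × 𝒴 ↦ ℓ p.1 p.2.1 p.2.2)
    {zz : γ → (𝒳 × 𝒴) × (𝒳 × 𝒴)} {x : γ → 𝒲 × Bool} (hzz : Measurable zz) (hx : Measurable x) :
    Measurable fun a ↦ lossGap ℓ (zz a) (x a) := by
  have hpair : Measurable fun a ↦ (zz a, (x a).2) := hzz.prodMk hx.snd
  exact (hℓ.comp (hx.fst.prodMk (measurable_testSel.comp hpair))).sub
    (hℓ.comp (hx.fst.prodMk (measurable_trainSel.comp hpair)))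

end LossGap

section ClasswiseBound

lemma ofReal_one_div_natCast_mul_toReal {n : ℕ} (hn : n ≠ 0) {p : ℝ≥0∞} (hp : p ≠ 0) :
    ENNReal.ofReal (1 / (n * p.toReal)) = (n : ℝ≥0∞)⁻¹ * p⁻¹ := by
  rw [← ENNReal.mul_inv (.inl (by simpa using hn)) (.inl (ENNReal.natCast_ne_top n)), one_div,
    ← ENNReal.toReal_natCast, ← ENNReal.toReal_mul, ← ENNReal.toReal_inv, ENNReal.ofReal_toReal]
  simpa using ⟨hn, hp⟩

/-- The two weights differ at the labels of probability `0`, where the real quotient is `0` and the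
extended one is `∞`. -/
lemma inv_mul_lintegral_inv_mul_lintegral {γ 𝒴 : Type*} [MeasurableSpace γ] [MeasurableSpace 𝒴]
    [Countable 𝒴] {ν : Measure γ} {P : Measure 𝒴} {n : ℕ} (hn : n ≠ 0) (G : 𝒴 → γ → ℝ≥0∞) :
    (n : ℝ≥0∞)⁻¹ * ∫⁻ y, (P {y})⁻¹ * ∫⁻ z, G y z ∂ν ∂P =
      ∫⁻ y, ∫⁻ z, ENNReal.ofReal (1 / (n * (P {y}).toReal)) * G y z ∂ν ∂P := by
  rw [← lintegral_const_mul' _ _ (by simpa using hn)]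
  refine lintegral_congr_ae (ae_iff_of_countable.2 fun y hy ↦ ?_)
  dsimp only
  rw [lintegral_const_mul' _ _ ENNReal.ofReal_ne_top, ofReal_one_div_natCast_mul_toReal hn hy,
    mul_assoc]

variable {Ω α γ 𝒴 ι : Type*} [MeasurableSpace Ω] [MeasurableSpace α] [StandardBorelSpace α]
  [Nonempty α] [MeasurableSpace γ] [MeasurableSpace 𝒴] [Countable 𝒴] [MeasurableSingletonClass 𝒴]
  [DecidableEq 𝒴] [Fintype ι] {μ : Measure Ω} [IsFiniteMeasure μ] {P : Measure 𝒴}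
  [IsFiniteMeasure P] {X : Ω → α} {B : ι → Ω → Bool} {Z : Ω → γ}

theorem enorm_integral_sum_le_lintegral_inv_mul_lintegral_sum_sqrt_dCMI
    (hX : AEMeasurable X μ) (hZ : AEMeasurable Z μ) (hB : ∀ i, HasLaw (B i) coin μ)
    (hZB : ∀ i, IndepFun Z (B i) μ) {f : ι → γ → α × Bool → ℝ}
    (hf : ∀ i, Measurable fun p : γ × (α × Bool) ↦ f i p.1 p.2) (hf1 : ∀ i z x, |f i z x| ≤ 1)
    (hanti : ∀ i z a, f i z (a, false) = -f i z (a, true)) {L L' : ι → γ → 𝒴}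
    (hL : ∀ i, Measurable (L i)) (hLP : ∀ i, (μ.map Z).map (L i) ≪ P) :
    ‖∫ ω, ∑ i, f i (Z ω) (X ω, B i ω) ∂μ‖ₑ ≤
      ∫⁻ y, (P {y})⁻¹ * ∫⁻ z, ∑ i,
        (2 * max (if L i z = y then 1 else 0) (if L' i z = y then 1 else 0) *
          dCMI μ X (B i) Z z) ^ (1 / 2 : ℝ) ∂(μ.map Z) ∂P := by
  have hXB (i : ι) : AEMeasurable (fun ω ↦ (X ω, B i ω)) μ := hX.prodMk (hB i).aemeasurable
  have hint (i : ι) : Integrable (fun p : γ × (α × Bool) ↦ f i p.1 p.2)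
      (μ.map fun ω ↦ (Z ω, X ω, B i ω)) :=
    .of_bound (hf i).aestronglyMeasurable 1 (ae_of_all _ fun p ↦ hf1 i p.1 p.2)
  calc ‖∫ ω, ∑ i, f i (Z ω) (X ω, B i ω) ∂μ‖ₑ
      ≤ ∑ i, ‖∫ ω, f i (Z ω) (X ω, B i ω) ∂μ‖ₑ := by
        have hint' (i : ι) : Integrable (fun ω ↦ f i (Z ω) (X ω, B i ω)) μ :=
          (hint i).comp_aemeasurable (hZ.prodMk (hXB i))
        rw [integral_finsetSum _ fun i _ ↦ hint' i]
        exact enorm_sum_le _ _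
    _ ≤ ∑ i, ∫⁻ z, ‖∫ x, f i z x ∂condDistrib (fun ω ↦ (X ω, B i ω)) Z μ z‖ₑ ∂(μ.map Z) :=
        Finset.sum_le_sum fun i _ ↦
          enorm_integral_le_lintegral_enorm_integral_condDistrib hZ (hXB i) (hint i)
    _ ≤ _ :=
        sum_lintegral_le_lintegral_inv_mul_lintegral_sum_sqrt_max hL hLP
          (fun i ↦ (hf i).stronglyMeasurable.integral_kernel_prod_right'.measurable.enorm)
          fun i ↦ ae_enorm_integral_condDistrib_le_sqrt_dCMI hZ (hB i) (hZB i)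
            (fun z ↦ (hf i).comp measurable_prodMk_left) (hf1 i) (hanti i)

end ClasswiseBound

section SuperSample

lemma indepFun_of_hasLaw_prodMk_prod {Ω α β : Type*} [MeasurableSpace Ω] [MeasurableSpace α]
    [MeasurableSpace β] {μ : Measure Ω} {A : Ω → α} {B : Ω → β} {P : Measure α} {Q : Measure β}
    [IsProbabilityMeasure P] [IsProbabilityMeasure Q]
    (h : HasLaw (fun ω ↦ (A ω, B ω)) (P.prod Q) μ) : IndepFun A B μ :=
  have := h.isFiniteMeasure
  (indepFun_iff_hasLaw_prodMk_prod (measurePreserving_fst.fun_comp_hasLaw h)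
    (measurePreserving_snd.fun_comp_hasLaw h)).2 h

variable {Ω 𝒵 ι : Type*} [MeasurableSpace Ω] [MeasurableSpace 𝒵] [Fintype ι]

/-- The super-sample setting: `Z` consists of independent pairs drawn from `PZ ⊗ PZ`, and `U`,
independent of `Z`, of independent fair coins. -/
def IsSuperSample (Z : Ω → ι → 𝒵 × 𝒵) (U : Ω → ι → Bool) (PZ : Measure 𝒵) (μ : Measure Ω) : Prop :=
  HasLaw (fun ω ↦ (Z ω, U ω)) ((Measure.pi fun _ ↦ PZ.prod PZ).prod (Measure.pi fun _ ↦ coin)) μ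

namespace IsSuperSample

variable {Z : Ω → ι → 𝒵 × 𝒵} {U : Ω → ι → Bool} {PZ : Measure 𝒵} [IsProbabilityMeasure PZ]
  {μ : Measure Ω}

lemma hasLaw_sample_fst (h : IsSuperSample Z U PZ μ) (i : ι) : HasLaw (fun ω ↦ (Z ω i).1) PZ μ :=
  measurePreserving_fst.fun_comp_hasLaw <|
    (measurePreserving_eval _ i).fun_comp_hasLaw (measurePreserving_fst.fun_comp_hasLaw h)

lemma hasLaw_selector (h : IsSuperSample Z U PZ μ) (i : ι) : HasLaw (fun ω ↦ U ω i) coin μ :=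
  (measurePreserving_eval _ i).fun_comp_hasLaw (measurePreserving_snd.fun_comp_hasLaw h)

lemma indepFun_selector (h : IsSuperSample Z U PZ μ) (i : ι) : IndepFun Z (fun ω ↦ U ω i) μ :=
  (indepFun_of_hasLaw_prodMk_prod h).comp measurable_id (measurable_pi_apply i)

end IsSuperSample

end SuperSample

theorem standard_gen_classwise_CMI_bound_general
    {Ω 𝒲 𝒳 𝒴 : Type*} [MeasurableSpace Ω]
    [MeasurableSpace 𝒲] [StandardBorelSpace 𝒲] [Nonempty 𝒲]
    [MeasurableSpace 𝒳]
    [MeasurableSpace 𝒴] [Countable 𝒴] [MeasurableSingletonClass 𝒴] [DecidableEq 𝒴]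
    (μ : Measure Ω) [IsProbabilityMeasure μ]
    (n : ℕ) (hn : 0 < n)
    (PZ : Measure (𝒳 × 𝒴)) [IsProbabilityMeasure PZ]
    (Z : Ω → Fin n → (𝒳 × 𝒴) × (𝒳 × 𝒴)) (hZ : AEMeasurable Z μ)
    (hPZ : ∀ i, HasLaw (fun ω ↦ (Z ω i).1) PZ μ)
    (U : Ω → Fin n → Bool) (hU : ∀ i, HasLaw (fun ω ↦ U ω i) coin μ)
    (hZU : ∀ i, IndepFun Z (fun ω ↦ U ω i) μ)
    (W : Ω → 𝒲) (hW : AEMeasurable W μ)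
    (ℓ : 𝒲 → 𝒳 → 𝒴 → ℝ) (hℓ : Measurable fun p : 𝒲 × 𝒳 × 𝒴 ↦ ℓ p.1 p.2.1 p.2.2)
    (hℓ01 : ∀ w x y, ℓ w x y ∈ Set.Icc (0 : ℝ) 1) :
    ENNReal.ofReal
        |∫ ω, (1 / (n : ℝ)) *
            ∑ i, (ℓ (W ω) (testSel (Z ω i) (U ω i)).1 (testSel (Z ω i) (U ω i)).2 -
                  ℓ (W ω) (trainSel (Z ω i) (U ω i)).1 (trainSel (Z ω i) (U ω i)).2) ∂μ|
      ≤ ∫⁻ y, (∫⁻ z, ENNReal.ofReal (1 / ((n : ℝ) * (PZ (Prod.snd ⁻¹' {y})).toReal)) *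
            ∑ i, (2 * max (if (z i).1.2 = y then (1 : ℝ≥0∞) else 0)
                          (if (z i).2.2 = y then (1 : ℝ≥0∞) else 0) *
                  dCMI μ W (fun ω ↦ U ω i) Z z) ^ (1 / 2 : ℝ)
            ∂(μ.map Z))
          ∂(PZ.map Prod.snd) := by
  have hY (i : Fin n) : Measurable fun z : Fin n → (𝒳 × 𝒴) × (𝒳 × 𝒴) ↦ (z i).1.2 := by fun_prop
  have hlabel (i : Fin n) : (μ.map Z).map (fun z ↦ (z i).1.2) = PZ.map Prod.snd := by
    rw [AEMeasurable.map_map_of_aemeasurable (hY i).aemeasurable hZ, ← (hPZ i).map_eq,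
      AEMeasurable.map_map_of_aemeasurable measurable_snd.aemeasurable (hPZ i).aemeasurable]
    rfl
  have hfiber (y : 𝒴) : PZ (Prod.snd ⁻¹' {y}) = PZ.map Prod.snd {y} :=
    (Measure.map_apply measurable_snd (measurableSet_singleton y)).symm
  simp only [hfiber]
  calc ENNReal.ofReal |∫ ω, 1 / (n : ℝ) * ∑ i, lossGap ℓ (Z ω i) (W ω, U ω i) ∂μ|
      = (n : ℝ≥0∞)⁻¹ * ‖∫ ω, ∑ i, lossGap ℓ (Z ω i) (W ω, U ω i) ∂μ‖ₑ := by
        rw [integral_const_mul, ← Real.enorm_eq_ofReal_abs, enorm_mul, one_div,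
          enorm_inv (by positivity), Real.enorm_natCast]
    _ ≤ _ := by
        gcongr
        exact enorm_integral_sum_le_lintegral_inv_mul_lintegral_sum_sqrt_dCMI hW hZ hU hZU
          (f := fun i z ↦ lossGap ℓ (z i))
          (fun i ↦ measurable_lossGap hℓ (by fun_prop) measurable_snd)
          (fun i z ↦ abs_lossGap_le_one hℓ01 (z i)) (fun i z ↦ lossGap_false (z i)) hY
          fun i ↦ (hlabel i).le.absolutelyContinuous
    _ = _ := inv_mul_lintegral_inv_mul_lintegral hn.ne' _

/-- **Corollary C.2 (label-dependent CMI bound for the standard generalization error)**: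
in the super-sample setting with a bounded loss `ℓ(w,x,y) ∈ [0,1]`, the standard expected
generalization error satisfies
`|gen| ≤ E_{Y'∼P_Y}[E_{Z_{[2n]}}[(1/n^{Y'}) Σ_i
    sqrt (2 max(𝟙{Y_i⁻=Y'},𝟙{Y_i⁺=Y'}) I_{Z_{[2n]}}(W;U_i))]]`. -/
theorem standard_gen_classwise_CMI_bound
    {Ω 𝒲 𝒳 𝒴 : Type*}
    [mΩ : MeasurableSpace Ω] [StandardBorelSpace Ω] [Nonempty Ω]
    [MeasurableSpace 𝒲] [StandardBorelSpace 𝒲] [Nonempty 𝒲]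
    [MeasurableSpace 𝒳] [StandardBorelSpace 𝒳]
    [MeasurableSpace 𝒴] [Countable 𝒴] [MeasurableSingletonClass 𝒴] [DecidableEq 𝒴]
    (μ : Measure Ω) [IsProbabilityMeasure μ]
    (n : ℕ) (hn : 0 < n)
    (PZ : Measure (𝒳 × 𝒴)) [IsProbabilityMeasure PZ]
    (Z : Ω → Fin n → (𝒳 × 𝒴) × (𝒳 × 𝒴)) (hZ : Measurable Z)
    (U : Ω → Fin n → Bool) (hU : Measurable U)
    (W : Ω → 𝒲) (hW : Measurable W)
    (hlaw : μ.map (fun ω => (Z ω, U ω)) =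
      (Measure.pi fun _ : Fin n => PZ.prod PZ).prod (Measure.pi fun _ : Fin n => coin))
    (hSle : MeasurableSpace.comap (fun ω (i : Fin n) => trainSel (Z ω i) (U ω i))
        inferInstance ≤ mΩ)
    (hMarkov : CondIndepFun
      (MeasurableSpace.comap (fun ω (i : Fin n) => trainSel (Z ω i) (U ω i)) inferInstance)
      hSle W (fun ω => (Z ω, U ω)) μ)
    (ℓ : 𝒲 → 𝒳 → 𝒴 → ℝ) (hℓ : Measurable fun p : 𝒲 × 𝒳 × 𝒴 => ℓ p.1 p.2.1 p.2.2)
    (hℓ01 : ∀ w x y', ℓ w x y' ∈ Set.Icc (0 : ℝ) 1) :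
    ENNReal.ofReal
        |∫ ω, (1 / (n : ℝ)) *
            ∑ i, (ℓ (W ω) (testSel (Z ω i) (U ω i)).1 (testSel (Z ω i) (U ω i)).2 -
                  ℓ (W ω) (trainSel (Z ω i) (U ω i)).1 (trainSel (Z ω i) (U ω i)).2) ∂μ|
      ≤ ∫⁻ y, (∫⁻ z, ENNReal.ofReal (1 / ((n : ℝ) * (PZ (Prod.snd ⁻¹' {y})).toReal)) *
            ∑ i, (2 * max (if (z i).1.2 = y then (1 : ℝ≥0∞) else 0)
                          (if (z i).2.2 = y then (1 : ℝ≥0∞) else 0) *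
                  dCMI μ W (fun ω => U ω i) Z z) ^ (1 / 2 : ℝ)
            ∂(μ.map Z))
          ∂(PZ.map Prod.snd) := by
  have hZU : IsSuperSample Z U PZ μ := ⟨(hZ.prodMk hU).aemeasurable, hlaw⟩
  exact standard_gen_classwise_CMI_bound_general μ n hn PZ Z hZ.aemeasurable hZU.hasLaw_sample_fst
    U hZU.hasLaw_selector hZU.indepFun_selector W hW.aemeasurable ℓ hℓ hℓ01
end
end

section
/- Assume the loss has the form ℓ(w,x,y) = ℓ(f_w(x),y) with values in [0,1]. Then the subtask generalization error satisfies |gen_{Q,E_Q}| ≤ E_{Y'~Q_Y}[E_{Z_{[2n]}}[(1/n^{Y'}) Σ_{i=1}^n sqrt(2·I_{Z_{[2n]}}(Δ_{Y'}L_i;U_i))]]. -/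
open MeasureTheory ProbabilityTheory
open scoped ENNReal

noncomputable section

/-!
Exchanging the two entries of a pair only flips a sign, so the test-minus-train difference equals
`U_i Δ_yL_i`. Given the super-sample, this variable would be centred and `[-1,1]`-valued if `U_i`
were independent of `Δ_yL_i`, hence sub-Gaussian with variance proxy `1` by Hoeffding's lemma. The
Donsker–Varadhan inequality compares the true conditional law with this product law, and optimising
its free parameter bounds the conditional mean of `U_i Δ_yL_i` by `sqrt (2 I_z(Δ_yL_i;U_i))`. The
triangle inequality then passes the bound through the averages over `Z`, `i` and `Y'`.
-/

open scoped NNReal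

/-- The sign `±1` encoded by a selector: `u = true` means `+1`. -/
def selectorSign (u : Bool) : ℝ := if u then 1 else -1

/-- The loss `𝟙{Y = y} · ℓ(w, (X, Y))` restricted to the samples `(X, Y)` of class `y`. -/
def classLoss {𝒲 𝒳 𝒴 : Type*} [DecidableEq 𝒴] (ℓ : 𝒲 → 𝒳 × 𝒴 → ℝ) (y : 𝒴) (w : 𝒲)
    (s : 𝒳 × 𝒴) : ℝ := if s.2 = y then ℓ w s else 0

section DonskerVaradhan

variable {α : Type*} [MeasurableSpace α] {P Q : Measure α} [IsProbabilityMeasure P]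
  [IsProbabilityMeasure Q] {X : α → ℝ}

lemma integral_le_integral_llr_add_log_integral_exp_s16 (hPQ : P ≪ Q) (hllr : Integrable (llr P Q) P)
    (hXP : Integrable X P) (hXQ : Integrable (fun x => Real.exp (X x)) Q) :
    ∫ x, X x ∂P ≤ ∫ x, llr P Q x ∂P + Real.log (∫ x, Real.exp (X x) ∂Q) := by
  have : IsProbabilityMeasure (Q.tilted X) := isProbabilityMeasure_tilted hXQ
  have tilted_nonneg := InformationTheory.integral_llr_add_sub_measure_univ_nonneg
    (hPQ.trans (absolutelyContinuous_tilted hXQ))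
    (integrable_llr_tilted_right hPQ hXP hllr hXQ)
  have tilted_eq := integral_llr_tilted_right hPQ hXP hXQ hllr
  simp only [probReal_univ] at tilted_nonneg
  linarith

variable {c : ℝ≥0}

lemma sq_integral_le_of_hasSubgaussianMGF_s16 (hPQ : P ≪ Q) (hllr : Integrable (llr P Q) P)
    (hXP : Integrable X P) (hX : HasSubgaussianMGF X c Q) :
    (∫ x, X x ∂P) ^ 2 ≤ 2 * c * ∫ x, llr P Q x ∂P := by
  have quadratic_nonneg (t : ℝ) :
      0 ≤ c / 2 * (t * t) + -(∫ x, X x ∂P) * t + ∫ x, llr P Q x ∂P := by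
    have hexp := hX.integrable_exp_mul t
    have hDV := integral_le_integral_llr_add_log_integral_exp_s16 hPQ hllr (hXP.const_mul t) hexp
    have hlog : Real.log (∫ x, Real.exp (t * X x) ∂Q) ≤ c * t ^ 2 / 2 :=
      (Real.log_le_iff_le_exp (integral_exp_pos hexp)).2 (hX.mgf_le t)
    rw [integral_const_mul] at hDV
    linarith
  have := discrim_le_zero quadratic_nonneg
  rw [discrim] at this
  linarith

lemma enorm_integral_le_rpow_KL_of_hasSubgaussianMGF (hc : c ≠ 0) (hXP : Integrable X P)
    (hX : HasSubgaussianMGF X c Q) :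
    ‖∫ x, X x ∂P‖ₑ ≤ (2 * c * KL P Q) ^ (1 / 2 : ℝ) := by
  unfold KL
  split_ifs with h
  · have hsq := sq_integral_le_of_hasSubgaussianMGF_s16 h.1 h.2 hXP hX
    calc ‖∫ x, X x ∂P‖ₑ = ENNReal.ofReal |∫ x, X x ∂P| := Real.enorm_eq_ofReal_abs _
      _ ≤ ENNReal.ofReal ((2 * c * ∫ x, llr P Q x ∂P) ^ (1 / 2 : ℝ)) := by
        rw [← Real.sqrt_eq_rpow]
        exact ENNReal.ofReal_le_ofReal (Real.abs_le_sqrt hsq)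
      _ = (2 * c * ENNReal.ofReal (∫ x, llr P Q x ∂P)) ^ (1 / 2 : ℝ) := by
        rw [← ENNReal.ofReal_rpow_of_nonneg ((sq_nonneg _).trans hsq) (by norm_num),
          ENNReal.ofReal_mul (by positivity), ENNReal.ofReal_mul (by norm_num)]
        simp
  · simp [ENNReal.mul_top, hc]

end DonskerVaradhan

section Selector

instance : IsProbabilityMeasure coin := ⟨by simp [coin, ENNReal.inv_two_add_inv_two]⟩

lemma measurable_selectorSign : Measurable selectorSign := measurable_from_top

lemma abs_selectorSign (u : Bool) : |selectorSign u| = 1 := by cases u <;> simp [selectorSign]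

lemma integral_selectorSign_coin : ∫ u, selectorSign u ∂coin = 0 := by
  rw [coin, integral_add_measure (Integrable.of_finite.smul_measure (by simp))
    (Integrable.of_finite.smul_measure (by simp))]
  simp [integral_smul_measure, selectorSign]

lemma integrable_mul_selectorSign {α : Type*} [MeasurableSpace α] {ν : Measure α} {f : α → ℝ}
    {V : α → Bool} (hf : Integrable f ν) (hV : AEMeasurable V ν) :
    Integrable (fun x => f x * selectorSign (V x)) ν :=
  hf.mul_bdd (c := 1) (measurable_selectorSign.comp_aemeasurable hV).aestronglyMeasurable
    (ae_of_all _ fun x => (abs_selectorSign (V x)).le)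

lemma sub_testSel_trainSel {𝒵 : Type*} (φ : 𝒵 → ℝ) (s : 𝒵 × 𝒵) (u : Bool) :
    φ (testSel s u) - φ (trainSel s u) = (φ s.1 - φ s.2) * selectorSign u := by
  cases u <;> simp [testSel, trainSel, selectorSign]

lemma integrable_mul_selectorSign_map_prodMk {Ω : Type*} [MeasurableSpace Ω] {μ : Measure Ω}
    {D : Ω → ℝ} {U : Ω → Bool} (hD : Integrable D μ) (hU : AEMeasurable U μ) :
    Integrable (fun p => p.1 * selectorSign p.2) (μ.map fun ω => (D ω, U ω)) :=
  integrable_mul_selectorSign ((integrable_map_measure measurable_fst.aestronglyMeasurable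
    (hD.aemeasurable.prodMk hU)).2 hD) measurable_snd.aemeasurable

lemma hasSubgaussianMGF_mul_selectorSign {ρ : Measure ℝ} [IsProbabilityMeasure ρ] {b : ℝ≥0}
    (hρ : ∀ᵐ x ∂ρ, |x| ≤ (b : ℝ)) :
    HasSubgaussianMGF (fun p : ℝ × Bool => p.1 * selectorSign p.2) (b ^ 2) (ρ.prod coin) := by
  have hbound : ∀ᵐ p ∂(ρ.prod coin), p.1 * selectorSign p.2 ∈ Set.Icc (-b : ℝ) b := by
    filter_upwards [Measure.quasiMeasurePreserving_fst.ae hρ] with p hp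
    rwa [Set.mem_Icc, ← abs_le, abs_mul, abs_selectorSign, mul_one]
  have hmean : ∫ p, p.1 * selectorSign p.2 ∂(ρ.prod coin) = 0 := by
    rw [integral_prod_mul (fun x => x) selectorSign, integral_selectorSign_coin, mul_zero]
  have hproxy : ‖(b : ℝ) - -b‖₊ / 2 = b := by
    rw [sub_neg_eq_add, ← two_mul]
    simp
  have hmeas : Measurable fun p : ℝ × Bool => p.1 * selectorSign p.2 :=
    measurable_fst.mul (measurable_selectorSign.comp measurable_snd)
  simpa only [hproxy] using
    hasSubgaussianMGF_of_mem_Icc_of_integral_eq_zero hmeas.aemeasurable hbound hmean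

end Selector

section ConditionalLaw

variable {Ω γ β : Type*} [MeasurableSpace Ω] [MeasurableSpace γ] [MeasurableSpace β]
  {μ : Measure Ω} {Z : Ω → γ} {V : Ω → β}

lemma condDistrib_ae_eq_of_indepFun [StandardBorelSpace β] [Nonempty β] [IsFiniteMeasure μ]
    (hZ : AEMeasurable Z μ) (hV : AEMeasurable V μ) (hZV : IndepFun Z V μ) :
    ∀ᵐ z ∂(μ.map Z), condDistrib V Z μ z = μ.map V := by
  refine condDistrib_ae_eq_of_measure_eq_compProd Z hV (κ := Kernel.const γ (μ.map V)) ?_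
  rw [Measure.compProd_const, hZV.map_prod_eq_prod_map_map hZ hV]

lemma indepFun_and_hasLaw_of_map_prodMk_eq_prod_pi {ι : Type*} [Fintype ι] [IsFiniteMeasure μ]
    {U : Ω → ι → β} {ρ : Measure γ} {ν : ι → Measure β} [IsProbabilityMeasure ρ]
    [∀ i, IsProbabilityMeasure (ν i)] (hZ : AEMeasurable Z μ) (hU : AEMeasurable U μ)
    (hlaw : μ.map (fun ω => (Z ω, U ω)) = ρ.prod (Measure.pi ν)) (i : ι) :
    IndepFun Z (fun ω => U ω i) μ ∧ HasLaw (fun ω => U ω i) (ν i) μ := by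
  have hZρ : HasLaw Z ρ μ := ⟨hZ, by rw [← Measure.fst_map_prodMk₀ hU, hlaw, Measure.fst_prod]⟩
  have hUν : HasLaw U (Measure.pi ν) μ :=
    ⟨hU, by rw [← Measure.snd_map_prodMk₀ hZ, hlaw, Measure.snd_prod]⟩
  have hindep : IndepFun Z U μ := (indepFun_iff_hasLaw_prodMk_prod hZρ hUν).2 ⟨hZ.prodMk hU, hlaw⟩
  exact ⟨hindep.comp measurable_id (measurable_pi_apply i),
    (measurePreserving_eval ν i).hasLaw.comp hUν⟩

lemma ae_integrable_condDistrib [StandardBorelSpace β] [Nonempty β] [IsFiniteMeasure μ]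
    {E : Type*} [NormedAddCommGroup E] {g : β → E} (hZ : AEMeasurable Z μ) (hV : AEMeasurable V μ)
    (hg : Integrable g (μ.map V)) : ∀ᵐ z ∂(μ.map Z), Integrable g (condDistrib V Z μ z) := by
  rw [← condDistrib_comp_map hZ hV] at hg
  exact ((Measure.integrable_comp_iff hg.1).1 hg).1

lemma integral_integral_condDistrib [StandardBorelSpace β] [Nonempty β] [IsFiniteMeasure μ]
    {E : Type*} [NormedAddCommGroup E] [NormedSpace ℝ E] {g : β → E} (hZ : AEMeasurable Z μ)
    (hV : AEMeasurable V μ) (hg : Integrable g (μ.map V)) :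
    ∫ z, ∫ v, g v ∂(condDistrib V Z μ z) ∂(μ.map Z) = ∫ ω, g (V ω) ∂μ := by
  rw [← integral_map hV hg.1]
  rw [← condDistrib_comp_map hZ hV, Measure.comp_eq_comp_const_apply] at hg ⊢
  rw [Kernel.integral_comp hg, Kernel.const_apply]

end ConditionalLaw

lemma finsetSum_lintegral_le_lintegral_finsetSum {α ι : Type*} [MeasurableSpace α] (ν : Measure α)
    (s : Finset ι) (F : ι → α → ℝ≥0∞) :
    ∑ i ∈ s, ∫⁻ x, F i x ∂ν ≤ ∫⁻ x, ∑ i ∈ s, F i x ∂ν := by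
  classical
  induction s using Finset.induction_on with
  | empty => simp
  | insert i s hi ih =>
    simp only [Finset.sum_insert hi]
    exact (add_le_add_right ih _).trans (le_lintegral_add _ _)

section MutualInformation

variable {Ω γ : Type*} [MeasurableSpace Ω] [MeasurableSpace γ] {μ : Measure Ω}
  [IsProbabilityMeasure μ] {Z : Ω → γ}

-- `p.1 * selectorSign p.2` is sub-Gaussian under `P_{D|z} ⊗ coin`, the product law in `I_z(D;U)`.
lemma enorm_integral_condDistrib_mul_selectorSign_le {D : Ω → ℝ} {U : Ω → Bool}
    (hZ : AEMeasurable Z μ) (hD : AEMeasurable D μ) (hD1 : ∀ᵐ ω ∂μ, |D ω| ≤ 1)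
    (hU : HasLaw U coin μ) (hZU : IndepFun Z U μ) :
    ∀ᵐ z ∂(μ.map Z),
      ‖∫ p, p.1 * selectorSign p.2 ∂(condDistrib (fun ω => (D ω, U ω)) Z μ z)‖ₑ
        ≤ (2 * dCMI μ D U Z z) ^ (1 / 2 : ℝ) := by
  have hint := integrable_mul_selectorSign_map_prodMk
    (Integrable.of_bound hD.aestronglyMeasurable 1 hD1) hU.aemeasurable
  have hD1_cond : ∀ᵐ z ∂(μ.map Z), ∀ᵐ x ∂(condDistrib D Z μ z), |x| ≤ 1 := by
    refine Measure.ae_ae_of_ae_comp ?_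
    rw [condDistrib_comp_map hZ hD]
    exact (ae_map_iff hD (measurableSet_le measurable_abs measurable_const)).2 hD1
  filter_upwards [ae_integrable_condDistrib hZ (hD.prodMk hU.aemeasurable) hint, hD1_cond,
    condDistrib_ae_eq_of_indepFun hZ hU.aemeasurable hZU] with z hint_z hD1_z hU_z
  have hsubG := hasSubgaussianMGF_mul_selectorSign (b := 1) hD1_z
  have hKL := enorm_integral_le_rpow_KL_of_hasSubgaussianMGF (by simp) hint_z hsubG
  simpa [dCMI, hU_z, hU.map_eq] using hKL

lemma enorm_integral_mul_selectorSign_le_lintegral_dCMI {D : Ω → ℝ} {U : Ω → Bool}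
    (hZ : AEMeasurable Z μ) (hD : AEMeasurable D μ) (hD1 : ∀ᵐ ω ∂μ, |D ω| ≤ 1)
    (hU : HasLaw U coin μ) (hZU : IndepFun Z U μ) :
    ‖∫ ω, D ω * selectorSign (U ω) ∂μ‖ₑ
      ≤ ∫⁻ z, (2 * dCMI μ D U Z z) ^ (1 / 2 : ℝ) ∂(μ.map Z) := by
  have hint := integrable_mul_selectorSign_map_prodMk
    (Integrable.of_bound hD.aestronglyMeasurable 1 hD1) hU.aemeasurable
  rw [← integral_integral_condDistrib hZ (hD.prodMk hU.aemeasurable) hint]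
  exact (enorm_integral_le_lintegral_enorm _).trans
    (lintegral_mono_ae (enorm_integral_condDistrib_mul_selectorSign_le hZ hD hD1 hU hZU))

lemma enorm_integral_const_mul_sum_mul_selectorSign_le {ι : Type*} [Fintype ι] {D : ι → Ω → ℝ}
    {U : ι → Ω → Bool} (hZ : AEMeasurable Z μ) (hD : ∀ i, AEMeasurable (D i) μ)
    (hD1 : ∀ i, ∀ᵐ ω ∂μ, |D i ω| ≤ 1) (hU : ∀ i, HasLaw (U i) coin μ)
    (hZU : ∀ i, IndepFun Z (U i) μ) (c : ℝ) :
    ‖∫ ω, c * ∑ i, D i ω * selectorSign (U i ω) ∂μ‖ₑ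
      ≤ ∫⁻ z, ‖c‖ₑ * ∑ i, (2 * dCMI μ (D i) (U i) Z z) ^ (1 / 2 : ℝ) ∂(μ.map Z) := by
  have hint (i : ι) : Integrable (fun ω => D i ω * selectorSign (U i ω)) μ :=
    integrable_mul_selectorSign (.of_bound (hD i).aestronglyMeasurable 1 (hD1 i))
      (hU i).aemeasurable
  calc ‖∫ ω, c * ∑ i, D i ω * selectorSign (U i ω) ∂μ‖ₑ
      = ‖c‖ₑ * ‖∑ i, ∫ ω, D i ω * selectorSign (U i ω) ∂μ‖ₑ := by
        rw [integral_const_mul, integral_finsetSum _ fun i _ => hint i, enorm_mul]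
    _ ≤ ‖c‖ₑ * ∑ i, ∫⁻ z, (2 * dCMI μ (D i) (U i) Z z) ^ (1 / 2 : ℝ) ∂(μ.map Z) := by
        gcongr
        exact (enorm_sum_le _ _).trans <| Finset.sum_le_sum fun i _ =>
          enorm_integral_mul_selectorSign_le_lintegral_dCMI hZ (hD i) (hD1 i) (hU i) (hZU i)
    _ ≤ ‖c‖ₑ * ∫⁻ z, ∑ i, (2 * dCMI μ (D i) (U i) Z z) ^ (1 / 2 : ℝ) ∂(μ.map Z) := by
        gcongr
        exact finsetSum_lintegral_le_lintegral_finsetSum _ _ _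
    _ = ∫⁻ z, ‖c‖ₑ * ∑ i, (2 * dCMI μ (D i) (U i) Z z) ^ (1 / 2 : ℝ) ∂(μ.map Z) :=
        (lintegral_const_mul' _ _ enorm_ne_top).symm

end MutualInformation

section ClassLoss

variable {𝒲 𝒳 𝒴 : Type*} [DecidableEq 𝒴] {ℓ : 𝒲 → 𝒳 × 𝒴 → ℝ} (y : 𝒴)

lemma classLoss_mem_Icc (hℓ01 : ∀ w s, ℓ w s ∈ Set.Icc (0 : ℝ) 1) (w : 𝒲) (s : 𝒳 × 𝒴) :
    classLoss ℓ y w s ∈ Set.Icc (0 : ℝ) 1 := by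
  unfold classLoss
  split_ifs
  · exact hℓ01 w s
  · simp

lemma measurable_classLoss [MeasurableSpace 𝒲] [MeasurableSpace 𝒳] [MeasurableSpace 𝒴]
    [MeasurableSingletonClass 𝒴] (hℓ : Measurable fun p : 𝒲 × (𝒳 × 𝒴) => ℓ p.1 p.2) :
    Measurable fun p : 𝒲 × (𝒳 × 𝒴) => classLoss ℓ y p.1 p.2 :=
  Measurable.ite ((measurable_snd.comp measurable_snd) (measurableSet_singleton y)) hℓ
    measurable_const

end ClassLoss

theorem subtask_deltaL_CMI_bound_general
    {Ω 𝒲 𝒳 𝒴 ι : Type*} [Fintype ι]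
    [MeasurableSpace Ω] [MeasurableSpace 𝒲] [MeasurableSpace 𝒳]
    [MeasurableSpace 𝒴] [MeasurableSingletonClass 𝒴] [DecidableEq 𝒴]
    (μ : Measure Ω) [IsProbabilityMeasure μ]
    (Z : Ω → ι → (𝒳 × 𝒴) × (𝒳 × 𝒴)) (hZ : AEMeasurable Z μ)
    (U : Ω → ι → Bool) (hU : ∀ i, HasLaw (fun ω => U ω i) coin μ)
    (hZU : ∀ i, IndepFun Z (fun ω => U ω i) μ)
    (W : Ω → 𝒲) (hW : AEMeasurable W μ)
    (ℓ : 𝒲 → 𝒳 × 𝒴 → ℝ) (hℓ : Measurable fun p : 𝒲 × (𝒳 × 𝒴) => ℓ p.1 p.2)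
    (hℓ01 : ∀ w s, ℓ w s ∈ Set.Icc (0 : ℝ) 1)
    (Q : Measure 𝒴) (c : 𝒴 → ℝ) :
    ∫⁻ y, ‖∫ ω, c y * ∑ i, (classLoss ℓ y (W ω) (testSel (Z ω i) (U ω i)) -
          classLoss ℓ y (W ω) (trainSel (Z ω i) (U ω i))) ∂μ‖ₑ ∂Q
      ≤ ∫⁻ y, ∫⁻ z, ‖c y‖ₑ * ∑ i, (2 * dCMI μ
            (fun ω => classLoss ℓ y (W ω) (Z ω i).1 - classLoss ℓ y (W ω) (Z ω i).2)
            (fun ω => U ω i) Z z) ^ (1 / 2 : ℝ) ∂(μ.map Z) ∂Q := by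
  refine lintegral_mono fun y => ?_
  simp only [sub_testSel_trainSel]
  have hZi (i : ι) : AEMeasurable (fun ω => Z ω i) μ := (measurable_pi_apply i).comp_aemeasurable hZ
  have hloss := measurable_classLoss y hℓ
  refine enorm_integral_const_mul_sum_mul_selectorSign_le hZ (fun i => ?_)
    (fun i => ae_of_all _ fun ω => ?_) hU hZU (c y)
  · exact (hloss.comp_aemeasurable (hW.prodMk (hZi i).fst)).sub
      (hloss.comp_aemeasurable (hW.prodMk (hZi i).snd))
  · have h₁ := classLoss_mem_Icc y hℓ01 (W ω) (Z ω i).1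
    have h₂ := classLoss_mem_Icc y hℓ01 (W ω) (Z ω i).2
    simpa using abs_sub_le_of_le_of_le h₁.1 h₁.2 h₂.1 h₂.2

/-- **Theorem 9 (subtask-Δ_YL-CMI bound)**: in the super-sample setting with predictions and
a bounded loss `ℓ(f_w(x),y) ∈ [0,1]` and target label set `A` with `P(Y ∈ A) > 0`, the
subtask generalization error `gen_{Q,E_Q} = E_{Y'∼Q_Y}[gen_{Y'}]` satisfies
`|gen_{Q,E_Q}| ≤ E_{Y'∼Q_Y}[E_{Z_{[2n]}}[(1/n^{Y'}) Σ_i sqrt (2 I_{Z_{[2n]}}(Δ_{Y'}L_i;U_i))]]`,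
where `Q_Y` is the law of the label conditioned on `{Y ∈ A}`. -/
theorem subtask_deltaL_CMI_bound
    {Ω 𝒲 𝒳 𝒴 Yhat : Type*}
    [mΩ : MeasurableSpace Ω] [StandardBorelSpace Ω] [Nonempty Ω]
    [MeasurableSpace 𝒲] [StandardBorelSpace 𝒲] [Nonempty 𝒲]
    [MeasurableSpace 𝒳] [StandardBorelSpace 𝒳]
    [MeasurableSpace 𝒴] [Countable 𝒴] [MeasurableSingletonClass 𝒴] [DecidableEq 𝒴]
    [MeasurableSpace Yhat] [StandardBorelSpace Yhat] [Nonempty Yhat]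
    (μ : Measure Ω) [IsProbabilityMeasure μ]
    (n : ℕ) (hn : 0 < n)
    (PZ : Measure (𝒳 × 𝒴)) [IsProbabilityMeasure PZ]
    (Z : Ω → Fin n → (𝒳 × 𝒴) × (𝒳 × 𝒴)) (hZ : Measurable Z)
    (U : Ω → Fin n → Bool) (hU : Measurable U)
    (W : Ω → 𝒲) (hW : Measurable W)
    (hlaw : μ.map (fun ω => (Z ω, U ω)) =
      (Measure.pi fun _ : Fin n => PZ.prod PZ).prod (Measure.pi fun _ : Fin n => coin))
    (hSle : MeasurableSpace.comap (fun ω (i : Fin n) => trainSel (Z ω i) (U ω i))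
        inferInstance ≤ mΩ)
    (hMarkov : CondIndepFun
      (MeasurableSpace.comap (fun ω (i : Fin n) => trainSel (Z ω i) (U ω i)) inferInstance)
      hSle W (fun ω => (Z ω, U ω)) μ)
    (f : 𝒲 → 𝒳 → Yhat) (hf : Measurable fun p : 𝒲 × 𝒳 => f p.1 p.2)
    (ℓ : Yhat → 𝒴 → ℝ) (hℓ : Measurable fun p : Yhat × 𝒴 => ℓ p.1 p.2)
    (hℓ01 : ∀ p y', ℓ p y' ∈ Set.Icc (0 : ℝ) 1)
    -- the subtask label set
    (A : Set 𝒴) (hA : MeasurableSet A) (hPA : 0 < PZ (Prod.snd ⁻¹' A)) :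
    ENNReal.ofReal
        |∫ y, (∫ ω, (1 / ((n : ℝ) * (PZ (Prod.snd ⁻¹' {y})).toReal)) *
            ∑ i, ((if (testSel (Z ω i) (U ω i)).2 = y then
                    ℓ (f (W ω) (testSel (Z ω i) (U ω i)).1) (testSel (Z ω i) (U ω i)).2 else 0) -
                  (if (trainSel (Z ω i) (U ω i)).2 = y then
                    ℓ (f (W ω) (trainSel (Z ω i) (U ω i)).1) (trainSel (Z ω i) (U ω i)).2 else 0))
            ∂μ)
          ∂((PZ.map Prod.snd)[|A])|
      ≤ ∫⁻ y, (∫⁻ z, ENNReal.ofReal (1 / ((n : ℝ) * (PZ (Prod.snd ⁻¹' {y})).toReal)) *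
            ∑ i, (2 *
                  dCMI μ
                    (fun ω =>
                      (if (Z ω i).1.2 = y then ℓ (f (W ω) ((Z ω i).1.1)) ((Z ω i).1.2) else 0) -
                        (if (Z ω i).2.2 = y then ℓ (f (W ω) ((Z ω i).2.1)) ((Z ω i).2.2) else 0))
                    (fun ω => U ω i) Z z) ^ (1 / 2 : ℝ)
            ∂(μ.map Z))
          ∂((PZ.map Prod.snd)[|A]) := by
  have hZU := indepFun_and_hasLaw_of_map_prodMk_eq_prod_pi hZ.aemeasurable hU.aemeasurable hlaw
  have hweight (y : 𝒴) : 0 ≤ 1 / (n * (PZ (Prod.snd ⁻¹' {y})).toReal) := by positivity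
  rw [← Real.enorm_eq_ofReal_abs]
  simp only [← Real.enorm_of_nonneg (hweight _)]
  exact (enorm_integral_le_lintegral_enorm _).trans
    (subtask_deltaL_CMI_bound_general μ Z hZ.aemeasurable U (fun i => (hZU i).2)
      (fun i => (hZU i).1) W hW.aemeasurable (fun w s => ℓ (f w s.1) s.2) (by fun_prop)
      (fun _ _ => hℓ01 _ _) _ _)
end
end
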